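/- Every lollipop graph L_{m,n} (m ≥ 3, n ≥ 0) has a unimodal domination polynomial. -/

import Mathlib

/-!
Relabel the vertices by `0, …, m + n - 1`, the clique being `{0, …, m - 1}` and the path hanging
off `m - 1`.  A set `U` is then dominating iff it meets the clique and contains one of
`v - 1, v, v + 1` for each `v ≥ m` (`dominates_iff`).  Deciding successively whether the last vertex
of the path belongs to `U` gives a recursion for the coefficient sequences `D_n` of `L_{m,n}`:
`D_{n+3} = x (D_{n+2} + D_{n+1} + D_n)` (`domNum_add_three`).

This recursion extends backwards to `D_{-1} = (1+x)^{m-1} - 1` and `D_{-2} = 1`; the extended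
sequence, with index moved by two, is `lolly`.  Write `f ≼ g` if the ratio `g i / f i` is
nondecreasing in `i` (`Prec`).  This relation is transitive here (`lolly_prec_trans`).  The relations `D_{-2} ≼ D_{-1} ≼ D_0 ≼ D_1` are inequalities
between binomial coefficients, and the recursion propagates them: if `D_n ≼ D_{n+1} ≼ D_{n+2} ≼
D_{n+3}`, then `D_{n+3} ≼ D_{n+4}`, because after cancelling common terms each remaining difference
compares two of those four sequences (`lolly_prec_succ`).

Finally `D_{n-1}, D_{n-2}, D_{n-3} ≼ D_n = x (D_{n-1} + D_{n-2} + D_{n-3})` gives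
log-concavity of `D_n` on expanding one factor of each product.  As its support is an interval (`lolly_pos_iff`), it is unimodal.
-/

/-- A finite set of vertices dominates the graph. -/
def Dominates {V : Type*} (G : SimpleGraph V) (U : Finset V) : Prop :=
  ∀ v : V, v ∈ U ∨ ∃ u ∈ U, G.Adj u v

/-- The number of dominating sets of size `i`. -/
noncomputable def domCount {V : Type*} [Fintype V] (G : SimpleGraph V) (i : ℕ) : ℕ :=
  Nat.card {U : Finset V // U.card = i ∧ Dominates G U}

/-- The asymmetric adjacency relation of the lollipop graph `L_{m,n}`: a complete graph on
`Fin m`, a path on `Fin n`, and an edge joining vertex `0` of the complete graph to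
the endpoint `0` of the path. -/
def lollipopRel {m n : ℕ} : (Fin m ⊕ Fin n) → (Fin m ⊕ Fin n) → Prop
  | .inl a, .inl b => a ≠ b
  | .inl a, .inr i => (a : ℕ) = 0 ∧ (i : ℕ) = 0
  | .inr i, .inr j => (i : ℕ) + 1 = (j : ℕ)
  | _, _ => False

/-- The `(m,n)`-lollipop graph. -/
def lollipop (m n : ℕ) : SimpleGraph (Fin m ⊕ Fin n) :=
  SimpleGraph.fromRel lollipopRel

/-- The coefficient sequence is non-decreasing up to `k` and non-increasing afterwards,
so in particular `k` is a mode. -/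
def UnimodalWithMode (d : ℕ → ℕ) (k : ℕ) : Prop :=
  (∀ i < k, d i ≤ d (i + 1)) ∧ (∀ i, k ≤ i → d (i + 1) ≤ d i)

/-- Unimodality of a coefficient sequence. -/
def UnimodalSeq (d : ℕ → ℕ) : Prop := ∃ k, UnimodalWithMode d k

/-! ### Ratio order and log-concavity -/

/-- The ratio order on sequences: `g i / f i` is nondecreasing in `i`, stated without division. -/
def Prec (f g : ℕ → ℕ) : Prop := ∀ i, g i * f (i + 1) ≤ f i * g (i + 1)

/-- Transitivity of the ratio order can fail across two consecutive zeros of the middle sequence;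
the last hypothesis deals with these. -/
lemma Prec.trans {f g h : ℕ → ℕ} (hfg : Prec f g) (hgh : Prec g h)
    (hz : ∀ i, g i = 0 → g (i + 1) = 0 → f (i + 1) = 0 ∨ h i = 0) : Prec f h := by
  intro i
  have h1 := hfg i
  have h2 := hgh i
  rcases Nat.eq_zero_or_pos (g i) with h0 | h0
  · rcases Nat.eq_zero_or_pos (g (i + 1)) with h3 | h3
    · rcases hz i h0 h3 with h4 | h4 <;> simp [h4]
    · refine Nat.le_of_mul_le_mul_right ?_ h3
      calc h i * f (i + 1) * g (i + 1) = (h i * g (i + 1)) * f (i + 1) := by ring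
        _ ≤ (g i * h (i + 1)) * f (i + 1) := Nat.mul_le_mul_right _ h2
        _ = (g i * f (i + 1)) * h (i + 1) := by ring
        _ ≤ (f i * g (i + 1)) * h (i + 1) := Nat.mul_le_mul_right _ h1
        _ = f i * h (i + 1) * g (i + 1) := by ring
  · refine Nat.le_of_mul_le_mul_right ?_ h0
    calc h i * f (i + 1) * g i = (g i * f (i + 1)) * h i := by ring
      _ ≤ (f i * g (i + 1)) * h i := Nat.mul_le_mul_right _ h1
      _ = (h i * g (i + 1)) * f i := by ring
      _ ≤ (g i * h (i + 1)) * f i := Nat.mul_le_mul_right _ h2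
      _ = f i * h (i + 1) * g i := by ring

lemma unimodalSeq_of_logConcave {d : ℕ → ℕ} (lo hi : ℕ)
    (hs : ∀ i, 0 < d i ↔ lo ≤ i ∧ i ≤ hi)
    (hlc : ∀ i, d i * d (i + 2) ≤ d (i + 1) * d (i + 1)) : UnimodalSeq d := by
  classical
  by_cases hex : ∃ i, d (i + 1) < d i
  · refine ⟨Nat.find hex, fun i hi' => not_lt.1 (Nat.find_min hex hi'), fun i hi' => ?_⟩
    -- The bound `lo ≤ i` keeps the induction away from the zeros before the support, where a
    -- weak descent need not be followed by another one.
    suffices h : lo ≤ i ∧ d (i + 1) ≤ d i from h.2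
    induction i, hi' using Nat.le_induction with
    | base =>
      have h := Nat.find_spec hex
      exact ⟨((hs _).1 (by omega)).1, h.le⟩
    | succ i _ ih =>
      obtain ⟨h1, h2⟩ := ih
      refine ⟨by omega, ?_⟩
      rcases Nat.eq_zero_or_pos (d i) with h0 | h0
      · have h3 := mt (hs i).2 (by omega)
        have h4 := mt (hs (i + 1 + 1)).1 (by omega)
        omega
      · exact Nat.le_of_mul_le_mul_left ((hlc i).trans (Nat.mul_le_mul_right _ h2)) h0
  · push Not at hex
    refine ⟨hi + 1, fun i _ => hex i, fun i hi' => ?_⟩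
    have h4 := mt (hs (i + 1)).1 (by omega)
    omega

lemma choose_logConcave (n k : ℕ) :
    n.choose k * n.choose (k + 2) ≤ n.choose (k + 1) * n.choose (k + 1) := by
  have h1 := Nat.choose_succ_right_eq n k
  have h2 := Nat.choose_succ_right_eq n (k + 1)
  rcases Nat.lt_or_ge k n with hk | hk
  · refine Nat.le_of_mul_le_mul_right (c := (n - k) * (k + 2)) ?_
      (Nat.mul_pos (by omega) (by omega))
    calc n.choose k * n.choose (k + 2) * ((n - k) * (k + 2))
        = (n.choose k * (n - k)) * (n.choose (k + 1 + 1) * (k + 1 + 1)) := by ring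
      _ = n.choose (k + 1) * n.choose (k + 1) * ((n - (k + 1)) * (k + 1)) := by
          rw [← h1, h2]; ring
      _ ≤ _ := Nat.mul_le_mul_left _ (Nat.mul_le_mul (by omega) (by omega))
  · simp [Nat.choose_eq_zero_of_lt (show n < k + 2 by omega)]

/-! ### The recursive sequence -/

/-- Coefficients of the sequence of polynomials with initial terms `1`, `(1 + x) ^ M - 1`,
`(1 + x) ^ (M + 1) - 1` in which each later term is `x` times the sum of the three preceding ones.
For `M = m - 1`, term `n + 2` is the domination polynomial of `L_{m,n}`. -/
def lolly (M : ℕ) : ℕ → ℕ → ℕ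
  | 0, i => if i = 0 then 1 else 0
  | 1, i => if i = 0 then 0 else M.choose i
  | 2, i => if i = 0 then 0 else (M + 1).choose i
  | _ + 3, 0 => 0
  | n + 3, i + 1 => lolly M (n + 2) i + lolly M (n + 1) i + lolly M n i

lemma lolly_zero (M i : ℕ) : lolly M 0 i = if i = 0 then 1 else 0 := by simp [lolly]
lemma lolly_one (M i : ℕ) : lolly M 1 i = if i = 0 then 0 else M.choose i := by simp [lolly]
lemma lolly_two (M i : ℕ) : lolly M 2 i = if i = 0 then 0 else (M + 1).choose i := by simp [lolly]
lemma lolly_add_three_zero (M n : ℕ) : lolly M (n + 3) 0 = 0 := by simp [lolly]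
lemma lolly_add_three (M n i : ℕ) :
    lolly M (n + 3) (i + 1) = lolly M (n + 2) i + lolly M (n + 1) i + lolly M n i := by
  simp [lolly]

/-- The support is an interval; it ends at `M + n - 1`, except that it is `{0}` for `n = 0`. -/
lemma lolly_pos_iff {M : ℕ} (hM : 1 ≤ M) (n i : ℕ) :
    0 < lolly M n i ↔ (n + 2) / 3 ≤ i ∧ i ≤ if n = 0 then 0 else M + n - 1 := by
  induction n using Nat.strong_induction_on generalizing i with
  | _ n ih =>
    match n, i with
    | 0, i => rw [lolly_zero]; split_ifs <;> simp_all
    | 1, i => rw [lolly_one]; split_ifs <;> simp_all [Nat.pos_iff_ne_zero, Nat.choose_eq_zero_iff]; omega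
    | 2, i => rw [lolly_two]; split_ifs <;> simp_all [Nat.pos_iff_ne_zero, Nat.choose_eq_zero_iff]; omega
    | n + 3, 0 => rw [lolly_add_three_zero]; simp
    | n + 3, i + 1 =>
      rw [lolly_add_three]
      have h0 := ih n (by omega) i
      have h1 := ih (n + 1) (by omega) i
      have h2 := ih (n + 2) (by omega) i
      rw [Nat.add_pos_iff_pos_or_pos, Nat.add_pos_iff_pos_or_pos, h0, h1, h2]
      simp only [Nat.succ_ne_zero, if_false]
      split_ifs <;> omega

lemma lolly_prec_trans {M p q r : ℕ} (hM : 1 ≤ M) (hp : p ≤ q) (hq : q ≤ r)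
    (h1 : Prec (lolly M p) (lolly M q)) (h2 : Prec (lolly M q) (lolly M r)) :
    Prec (lolly M p) (lolly M r) := by
  refine h1.trans h2 fun i h3 h4 => ?_
  have a1 := lolly_pos_iff hM q i
  have a2 := lolly_pos_iff hM q (i + 1)
  have a3 := lolly_pos_iff hM p (i + 1)
  have a4 := lolly_pos_iff hM r i
  rw [h3] at a1
  rw [h4] at a2
  by_contra hcon
  have b3 := a3.1 (by omega)
  have b4 := a4.1 (by omega)
  split_ifs at * <;> omega

lemma lolly_prec_zero (M n : ℕ) : Prec (lolly M 0) (lolly M n) := by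
  intro i; simp [lolly_zero]

lemma lolly_prec_one (M : ℕ) : Prec (lolly M 1) (lolly M 2) := by
  rintro (_ | j)
  · simp [lolly_one, lolly_two]
  · have h := choose_logConcave M j
    simp only [lolly_one, lolly_two, Nat.succ_ne_zero, if_false, Nat.choose_succ_succ']
    simp only [add_assoc, Nat.reduceAdd] at h ⊢
    nlinarith

lemma lolly_prec_two (M : ℕ) : Prec (lolly M 2) (lolly M 3) := by
  rintro (_ | _ | k)
  · simp [lolly_add_three_zero]
  · have h : (M + 1).choose 2 * 2 = (M + 1) * M := by
      simpa using Nat.choose_succ_right_eq (M + 1) 1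
    simp only [lolly_add_three M 0, zero_add, lolly_zero, lolly_one, lolly_two]
    simp
    nlinarith
  · have h := choose_logConcave (M + 1) (k + 1)
    have h' := choose_logConcave M (k + 1)
    simp only [lolly_add_three M 0, zero_add, lolly_zero, lolly_one, lolly_two, Nat.succ_ne_zero,
      if_false]
    have e1 := Nat.choose_succ_succ' M (k + 1)
    have e2 := Nat.choose_succ_succ' M (k + 2)
    simp only [add_assoc, Nat.reduceAdd, add_zero] at *
    have h3 : M.choose (k + 1) * (M + 1).choose (k + 3)
        ≤ (M + 1).choose (k + 2) * M.choose (k + 2) := by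
      rw [e1, e2]; nlinarith
    nlinarith

lemma lolly_prec_succ {M : ℕ} (hM : 1 ≤ M) (n : ℕ) :
    Prec (lolly M n) (lolly M (n + 1)) := by
  induction n using Nat.strong_induction_on with
  | _ n ih =>
    match n with
    | 0 => exact lolly_prec_zero M 1
    | 1 => exact lolly_prec_one M
    | 2 => exact lolly_prec_two M
    | n + 3 =>
      have h01 := ih n (by omega)
      have h12 := ih (n + 1) (by omega)
      have h23 := ih (n + 2) (by omega)
      have h02 := lolly_prec_trans hM (by omega) (by omega) h01 h12
      have h13 := lolly_prec_trans hM (by omega) (by omega) h12 h23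
      have h03 := lolly_prec_trans hM (by omega) (by omega) h02 h23
      rintro (_ | j)
      · simp [lolly_add_three_zero, lolly_add_three_zero M (n + 1)]
      · have a1 := h01 j
        have a2 := h02 j
        have a3 := h03 j
        have a4 := h13 j
        have a5 := h23 j
        have e1 := lolly_add_three M (n + 1) j
        have e2 := lolly_add_three M (n + 1) (j + 1)
        have e3 := lolly_add_three M n j
        have e4 := lolly_add_three M n (j + 1)
        simp only [add_assoc, Nat.reduceAdd] at *
        calc lolly M (n + 4) (j + 1) * lolly M (n + 3) (j + 2)
            = (lolly M (n + 3) j + (lolly M (n + 2) j + lolly M (n + 1) j))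
              * (lolly M (n + 2) (j + 1) + (lolly M (n + 1) (j + 1) + lolly M n (j + 1))) := by
              rw [e1, e4]
          _ ≤ (lolly M (n + 2) j + (lolly M (n + 1) j + lolly M n j))
              * (lolly M (n + 3) (j + 1) + (lolly M (n + 2) (j + 1) + lolly M (n + 1) (j + 1))) := by
              nlinarith
          _ = lolly M (n + 3) (j + 1) * lolly M (n + 4) (j + 2) := by rw [e2, ← e3]

lemma lolly_logConcave {M : ℕ} (hM : 1 ≤ M) (n i : ℕ) :
    lolly M (n + 2) i * lolly M (n + 2) (i + 2)
      ≤ lolly M (n + 2) (i + 1) * lolly M (n + 2) (i + 1) := by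
  match n, i with
  | 0, 0 => simp [lolly_two]
  | 0, i + 1 => simpa [lolly_two] using choose_logConcave (M + 1) (i + 1)
  | n + 1, i =>
    have h01 := lolly_prec_succ hM n
    have h12 := lolly_prec_succ hM (n + 1)
    have h23 := lolly_prec_succ hM (n + 2)
    have h13 := lolly_prec_trans hM (by omega) (by omega) h12 h23 i
    have h03 := lolly_prec_trans hM (by omega) (by omega) h01
      (lolly_prec_trans hM (by omega) (by omega) h12 h23) i
    have h23 := h23 i
    -- Only one factor on each side is expanded, so that the terms match the three relations.
    have e1 := lolly_add_three M n i
    have e2 := lolly_add_three M n (i + 1)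
    simp only [add_assoc, Nat.reduceAdd] at *
    rw [e2]
    nth_rw 1 [e1]
    nlinarith

lemma lolly_unimodal {M : ℕ} (hM : 1 ≤ M) (n : ℕ) : UnimodalSeq (lolly M (n + 2)) :=
  unimodalSeq_of_logConcave _ _ (lolly_pos_iff hM (n + 2)) (lolly_logConcave hM n)

/-! ### Counting sets of natural numbers -/

open Classical in
/-- The number of subsets of `{0, …, N - 1}` with `i` elements and property `p`. -/
noncomputable def cnt (N : ℕ) (p : Finset ℕ → Prop) (i : ℕ) : ℕ :=
  (((Finset.range N).powersetCard i).filter p).card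

lemma cnt_congr {N : ℕ} {p q : Finset ℕ → Prop} (i : ℕ)
    (h : ∀ U ⊆ Finset.range N, (p U ↔ q U)) : cnt N p i = cnt N q i := by
  classical
  unfold cnt
  congr 1
  apply Finset.filter_congr
  intro U hU
  exact h U (Finset.mem_powersetCard.1 hU).1

lemma cnt_zero {N : ℕ} {p : Finset ℕ → Prop} (h : ¬ p ∅) : cnt N p 0 = 0 := by
  simp [cnt, Finset.filter_singleton, h]

lemma cnt_true (N i : ℕ) : cnt N (fun _ => True) i = N.choose i := by
  simp [cnt]

lemma cnt_false (N i : ℕ) : cnt N (fun _ => False) i = 0 := by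
  simp [cnt]

lemma cnt_succ (N : ℕ) (p : Finset ℕ → Prop) (i : ℕ) :
    cnt (N + 1) p (i + 1) = cnt N p (i + 1) + cnt N (fun U => p (insert N U)) i := by
  classical
  unfold cnt
  have hN : ∀ W ∈ (Finset.range N).powersetCard i, N ∉ W := by
    intro W hW hNW
    have := (Finset.mem_powersetCard.1 hW).1 hNW
    simp at this
  rw [Finset.range_add_one, Finset.powersetCard_succ_insert (by simp), Finset.filter_union,
    Finset.card_union_of_disjoint, Finset.filter_image, Finset.card_image_of_injOn]
  · intro U hU V hV h
    have hU' := hN U (Finset.mem_filter.1 hU).1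
    have hV' := hN V (Finset.mem_filter.1 hV).1
    rw [← Finset.erase_insert hU', ← Finset.erase_insert hV']
    exact congrArg (fun s => s.erase N) h
  · rw [Finset.disjoint_left]
    intro U hU hU'
    simp only [Finset.mem_filter, Finset.mem_image, Finset.mem_powersetCard] at hU hU'
    obtain ⟨⟨V, _, rfl⟩, _⟩ := hU'
    have := hU.1.1 (Finset.mem_insert_self N V)
    simp at this

/-- `U` meets the clique `{0, …, m - 1}`, and each path vertex `v` with `m ≤ v < N` is dominated
by `U`. -/
def Good (m N : ℕ) (U : Finset ℕ) : Prop :=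
  (∃ u ∈ U, u < m) ∧ ∀ v, m ≤ v → v < N → v - 1 ∈ U ∨ v ∈ U ∨ v + 1 ∈ U

/-- The number of dominating sets of size `i` of the relabelled `L_{m,n}`. -/
noncomputable def domNum (m n i : ℕ) : ℕ := cnt (m + n) (Good m (m + n)) i

/-- The number of sets of size `i` in the relabelled `L_{m,n}` which dominate all path vertices
but possibly the last one, and the clique. -/
noncomputable def almostNum (m n i : ℕ) : ℕ := cnt (m + n) (Good m (m + n - 1)) i

/-- The number of dominating sets of size `i` of the relabelled `L_{m,n}` which contain the vertex
`m + n - 1`, that is, the far end of the path (or its attaching vertex if `n = 0`). -/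
noncomputable def lastNum (m n i : ℕ) : ℕ :=
  cnt (m + n) (fun U => Good m (m + n) U ∧ m + n - 1 ∈ U) i

lemma not_good_empty (m N : ℕ) : ¬ Good m N ∅ := by simp [Good]

lemma domNum_zero_right (m n : ℕ) : domNum m n 0 = 0 := cnt_zero (not_good_empty _ _)
lemma almostNum_zero_right (m n : ℕ) : almostNum m n 0 = 0 := cnt_zero (not_good_empty _ _)
lemma lastNum_zero_right (m n : ℕ) : lastNum m n 0 = 0 :=
  cnt_zero fun h => not_good_empty _ _ h.1

/-- Adding the vertex `N` to a set dominates `N - 1` and `N`, and no other path vertex up to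
`N`. -/
lemma good_insert {m N K : ℕ} {U : Finset ℕ} (hm : m ≤ N) (h1 : N ≤ K) (h2 : K ≤ N + 1) :
    Good m K (insert N U) ↔ Good m (N - 1) U := by
  unfold Good
  refine and_congr ?_ ?_
  · simp only [Finset.mem_insert]
    constructor
    · rintro ⟨u, rfl | hu, hlt⟩
      · omega
      · exact ⟨u, hu, hlt⟩
    · rintro ⟨u, hu, hlt⟩
      exact ⟨u, Or.inr hu, hlt⟩
  · simp only [Finset.mem_insert]
    constructor
    · intro h v hv hvN
      have := h v hv (by omega)
      rcases this with (h | h) | (h | h) | (h | h) <;> first | omega | tauto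
    · intro h v hv hvN
      by_cases hc : v < N - 1
      · have := h v hv hc
        tauto
      · have : v = N ∨ v + 1 = N := by omega
        tauto

/-- A set avoiding the vertex `N` dominates `N` exactly if it contains `N - 1`. -/
lemma good_succ {m N : ℕ} {U : Finset ℕ} (hm : m ≤ N) (hU : U ⊆ Finset.range N) :
    Good m (N + 1) U ↔ Good m N U ∧ N - 1 ∈ U := by
  have hN : ∀ x, N ≤ x → x ∉ U := fun x hx hxU => by
    have := Finset.mem_range.1 (hU hxU)
    omega
  unfold Good
  rw [and_assoc]
  refine and_congr_right fun _ => ⟨fun h => ⟨fun v h1 h2 => h v h1 (by omega), ?_⟩, ?_⟩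
  · have := h N hm (by omega)
    have h1 := hN N le_rfl
    have h2 := hN (N + 1) (by omega)
    tauto
  · rintro ⟨h, h1⟩ v hv hv'
    by_cases hc : v < N
    · exact h v hv hc
    · obtain rfl : v = N := by omega
      exact Or.inl h1

lemma domNum_succ (m n j : ℕ) :
    domNum m (n + 1) (j + 1) = lastNum m n (j + 1) + almostNum m n j := by
  unfold domNum lastNum almostNum
  rw [← add_assoc, cnt_succ]
  congr 1
  · exact cnt_congr _ fun U hU => good_succ (by omega) hU
  · exact cnt_congr _ fun U hU => good_insert (by omega) (by omega) (by omega)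

lemma almostNum_succ (m n j : ℕ) :
    almostNum m (n + 1) (j + 1) = domNum m n (j + 1) + almostNum m n j := by
  unfold domNum almostNum
  rw [← add_assoc, cnt_succ]
  congr 1
  exact cnt_congr _ fun U hU => good_insert (by omega) (by omega) (by omega)

lemma lastNum_succ (m n j : ℕ) : lastNum m (n + 1) (j + 1) = almostNum m n j := by
  unfold lastNum almostNum
  rw [← add_assoc, cnt_succ, ← Nat.zero_add (cnt (m + n) (Good m (m + n - 1)) j)]
  congr 1
  · rw [← cnt_false (m + n) (j + 1)]
    refine cnt_congr _ fun U hU => iff_of_false (fun h => ?_) id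
    have := hU h.2
    simp at this
  · refine cnt_congr _ fun U hU => ?_
    rw [good_insert (by omega) (by omega) (by omega)]
    simp

lemma almostNum_zero (m i : ℕ) : almostNum m 0 i = domNum m 0 i := by
  refine cnt_congr _ fun U hU => ?_
  unfold Good
  refine and_congr_right fun _ => iff_of_true ?_ ?_ <;> intros <;> omega

lemma domNum_zero (m i : ℕ) : domNum m 0 i = if i = 0 then 0 else m.choose i := by
  split_ifs with h
  · rw [h, domNum_zero_right]
  · classical
    rw [← cnt_true]
    unfold domNum cnt
    congr 1
    ext U
    simp only [Finset.mem_filter]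
    refine and_congr_right fun hU => ?_
    obtain ⟨h1, h2⟩ := Finset.mem_powersetCard.1 hU
    obtain ⟨u, hu⟩ := Finset.card_pos.1 (show 0 < U.card by omega)
    refine iff_of_true ⟨⟨u, hu, by simpa using h1 hu⟩, ?_⟩ trivial
    intros; omega

lemma lastNum_zero (M j : ℕ) : lastNum (M + 1) 0 (j + 1) = M.choose j := by
  unfold lastNum
  rw [add_zero, cnt_succ, ← cnt_true M j, ← Nat.zero_add (cnt M (fun _ => True) j)]
  congr 1
  · rw [← cnt_false M (j + 1)]
    refine cnt_congr _ fun U hU => iff_of_false (fun h => ?_) id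
    have := hU h.2
    simp at this
  · refine cnt_congr _ fun U hU => iff_of_true ⟨⟨⟨M, by simp, by omega⟩, ?_⟩, by simp⟩ trivial
    intros; omega

lemma domNum_add_two (m n j : ℕ) :
    domNum m (n + 2) (j + 1) = almostNum m n j + almostNum m (n + 1) j := by
  rw [domNum_succ m (n + 1), lastNum_succ]

lemma domNum_add_three (m n j : ℕ) :
    domNum m (n + 3) (j + 1) = domNum m (n + 2) j + domNum m (n + 1) j + domNum m n j := by
  rw [domNum_add_two m (n + 1)]
  rcases j with _ | k
  · simp [domNum_zero_right, almostNum_zero_right]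
  · rw [almostNum_succ, almostNum_succ m (n + 1), domNum_add_two]
    ring

lemma domNum_eq_lolly (M n i : ℕ) : domNum (M + 1) n i = lolly M (n + 2) i := by
  induction n using Nat.strong_induction_on generalizing i with
  | _ n ih =>
    match n, i with
    | 0, i => rw [domNum_zero, lolly_two]
    | n + 1, 0 => rw [domNum_zero_right]; exact (lolly_add_three_zero M n).symm
    | 1, j + 1 =>
      rw [domNum_succ M.succ 0 j, lolly_add_three M 0, almostNum_zero, domNum_zero,
        lastNum_zero, lolly_two, lolly_one, lolly_zero]
      split_ifs with h
      · simp [h]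
      · simp; ring
    | 2, j + 1 =>
      have h1 := ih 1 (by omega) j
      rw [lolly_add_three M 1, ← h1, domNum_add_two, almostNum_zero, lolly_two, lolly_one]
      rcases j with _ | k
      · simp [domNum_zero_right, almostNum_zero_right]
      · rw [almostNum_succ, almostNum_zero, domNum_succ, lastNum_zero, almostNum_zero,
          domNum_zero]
        simp [Nat.choose_succ_succ']
        ring
    | n + 3, j + 1 =>
      rw [domNum_add_three, ih (n + 2) (by omega), ih (n + 1) (by omega), ih n (by omega)]
      exact (lolly_add_three M (n + 2) j).symm

/-! ### Relabelling the lollipop graph -/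

/-- The labelling of the vertices of `L_{m,n}` by `0, …, m + n - 1`.  The clique is reversed, so that
its vertex `0`, which carries the path, gets the label `m - 1` next to the label `m` of the first
path vertex. -/
def lollipopLabel (m n : ℕ) : Fin m ⊕ Fin n ↪ ℕ where
  toFun := Sum.elim (fun a => m - 1 - a) (fun i => m + i)
  inj' := by
    rintro (a | a) (b | b) h <;> simp at h <;> grind

@[simp] lemma lollipopLabel_inl {m n : ℕ} (a : Fin m) :
    lollipopLabel m n (Sum.inl a) = m - 1 - a := rfl
@[simp] lemma lollipopLabel_inr {m n : ℕ} (i : Fin n) :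
    lollipopLabel m n (Sum.inr i) = m + i := rfl

lemma lollipopLabel_lt {m n : ℕ} (v : Fin m ⊕ Fin n) : lollipopLabel m n v < m + n := by
  rcases v with a | a <;> simp <;> omega

lemma exists_lollipopLabel {m n x : ℕ} (hx : x < m + n) : ∃ v, lollipopLabel m n v = x := by
  by_cases h : x < m
  · exact ⟨Sum.inl ⟨m - 1 - x, by omega⟩, by simp; omega⟩
  · exact ⟨Sum.inr ⟨x - m, by omega⟩, by simp; omega⟩

/-- In terms of labels: two vertices are adjacent iff they are distinct and either both lie in the
clique, or they are consecutive and not both in the clique. -/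
lemma lollipop_adj_iff {m n : ℕ} (u v : Fin m ⊕ Fin n) :
    (lollipop m n).Adj u v ↔ lollipopLabel m n u ≠ lollipopLabel m n v ∧
      ((lollipopLabel m n u < m ∧ lollipopLabel m n v < m) ∨
        lollipopLabel m n u + 1 = lollipopLabel m n v ∨
        lollipopLabel m n v + 1 = lollipopLabel m n u) := by
  rw [(lollipopLabel m n).injective.ne_iff]
  unfold lollipop
  rw [SimpleGraph.fromRel_adj]
  refine and_congr_right fun hne => ?_
  rcases u with a | a <;> rcases v with b | b <;> simp [lollipopRel] at hne ⊢ <;> grind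

lemma dominates_iff {m n : ℕ} (hm : 3 ≤ m) (U : Finset (Fin m ⊕ Fin n)) :
    Dominates (lollipop m n) U ↔ Good m (m + n) (U.map (lollipopLabel m n)) := by
  set e := lollipopLabel m n with he
  have hmem : ∀ v, v ∈ U ↔ e v ∈ U.map e := fun v => (Finset.mem_map' e).symm
  constructor
  · intro h
    refine ⟨?_, fun x hx hxn => ?_⟩
    · -- The label `0` belongs to a clique vertex not adjacent to the path, since `m ≥ 2`.
      obtain ⟨v, hv⟩ := exists_lollipopLabel (m := m) (n := n) (x := 0) (by omega)
      rcases h v with h1 | ⟨u, hu, hadj⟩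
      · exact ⟨e v, (hmem v).1 h1, by rw [he, hv]; omega⟩
      · rw [lollipop_adj_iff, hv] at hadj
        exact ⟨e u, (hmem u).1 hu, by rw [he]; omega⟩
    · obtain ⟨v, rfl⟩ := exists_lollipopLabel hxn
      rcases h v with h1 | ⟨u, hu, hadj⟩
      · exact Or.inr (Or.inl ((hmem v).1 h1))
      · rw [lollipop_adj_iff] at hadj
        have hu' := (hmem u).1 hu
        rcases hadj.2 with h2 | h2 | h2
        · omega
        · left; rwa [← h2]
        · right; right; rwa [h2]
  · rintro ⟨⟨x, hx, hxm⟩, hpath⟩ v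
    have key : ∀ y ∈ U.map e, (y = e v ∨ (y < m ∧ e v < m) ∨ y + 1 = e v ∨ e v + 1 = y) →
        v ∈ U ∨ ∃ u ∈ U, (lollipop m n).Adj u v := by
      intro y hy hyv
      by_cases hyv' : y = e v
      · left; rw [hmem, ← hyv']; exact hy
      · right
        obtain ⟨u, hu, rfl⟩ := Finset.mem_map.1 hy
        refine ⟨u, hu, ?_⟩
        rw [lollipop_adj_iff]
        tauto
    by_cases hv : e v < m
    · exact key x hx (by omega)
    · rcases hpath (e v) (by omega) (lollipopLabel_lt v) with h | h | h
      · exact key _ h (by omega)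
      · exact key _ h (by omega)
      · exact key _ h (by omega)

lemma domCount_lollipop {m n : ℕ} (hm : 3 ≤ m) (i : ℕ) :
    domCount (lollipop m n) i = domNum m n i := by
  classical
  unfold domCount domNum cnt
  rw [Nat.card_eq_fintype_card, Fintype.card_subtype]
  refine Finset.card_bij (fun U _ => U.map (lollipopLabel m n)) ?_ ?_ ?_
  · intro U hU
    simp only [Finset.mem_filter, Finset.mem_univ, true_and, Finset.mem_powersetCard,
      Finset.card_map] at hU ⊢
    refine ⟨⟨?_, hU.1⟩, (dominates_iff hm U).1 hU.2⟩
    intro x hx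
    obtain ⟨u, _, rfl⟩ := Finset.mem_map.1 hx
    exact Finset.mem_range.2 (lollipopLabel_lt u)
  · intro U _ V _ h
    exact Finset.map_injective _ h
  · intro W hW
    simp only [Finset.mem_filter, Finset.mem_powersetCard] at hW
    obtain ⟨⟨hsub, hcard⟩, hgood⟩ := hW
    have hW' : (Finset.univ.filter fun v => lollipopLabel m n v ∈ W).map (lollipopLabel m n)
        = W := by
      ext x
      simp only [Finset.mem_map, Finset.mem_filter, Finset.mem_univ, true_and]
      constructor
      · rintro ⟨v, hv, rfl⟩
        exact hv
      · intro hx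
        obtain ⟨v, rfl⟩ := exists_lollipopLabel (Finset.mem_range.1 (hsub hx))
        exact ⟨v, hx, rfl⟩
    refine ⟨_, ?_, hW'⟩
    simp only [Finset.mem_filter, Finset.mem_univ, true_and]
    rw [dominates_iff hm, hW', ← Finset.card_map (lollipopLabel m n), hW']
    exact ⟨hcard, hgood⟩

theorem lollipop_unimodal (m n : ℕ) (hm : 3 ≤ m) :
    UnimodalSeq (domCount (lollipop m n)) := by
  obtain ⟨M, rfl⟩ : ∃ M, m = M + 1 := ⟨m - 1, by omega⟩
  have h : domCount (lollipop (M + 1) n) = lolly M (n + 2) := by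
    funext i
    rw [domCount_lollipop hm, domNum_eq_lolly]
  rw [h]
  exact lolly_unimodal (by omega) n
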